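/- For any finite simple graphs G of order n ≥ 2 and H of order n' ≥ 2, the super domination number of the Cartesian product G □ H satisfies ⌈nn'/2⌉ ≤ γ_sp(G □ H) ≤ n'·γ_sp(G) − λ(G)·(n' − γ_sp(H)). -/

import Mathlib

/-!
Lower bound: sending each vertex outside a super dominating set `D` to a private neighbour in `D`
is injective, so `D` contains at least half of the vertices.

Upper bound: let `S`, `S*`, `X` realise `λ(G)` and let `T` be a minimum super dominating set of
`H`. The set `D = (S × W) \ (X × Tᶜ)` has `n' γ(G) - λ(G) (n' - γ(H))` elements. It is super
dominating in `G □ H`: a vertex `(u, w)` with `u ∉ S` is handled by `(u*, w)`, where `u* ∈ S*`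
cannot lie in `X` or be adjacent to `X`; a vertex `(x, w)` with `x ∈ X`, `w ∉ T` is handled by
`(x, w*)`, where `w*` is a private neighbour of `w` in `T` and `x` has no neighbour outside `S`.
-/

open SimpleGraph

/-- `D` is a super dominating set of `G`: every vertex outside `D` has a private
neighbour in `D` with respect to the complement of `D`. -/
def IsSuperDominatingSet {V : Type*} (G : SimpleGraph V) (D : Set V) : Prop :=
  ∀ u ∈ Dᶜ, ∃ v ∈ D, G.neighborSet v ∩ Dᶜ = {u}

/-- The super domination number of `G`. -/
noncomputable def superDomNum {V : Type*} (G : SimpleGraph V) : ℕ :=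
  sInf {k | ∃ D : Set V, IsSuperDominatingSet G D ∧ D.ncard = k}

/-- The parameter `λ(G)`: the maximum cardinality of a set `X ⊆ S`, over all
`γ_sp(G)`-sets `S` and all `S* ∈ 𝒫(S)`, with `N(X) ∩ ((V \ S) ∪ S*) = ∅`. -/
noncomputable def lambdaParam {V : Type*} (G : SimpleGraph V) : ℕ :=
  sSup {k | ∃ S : Set V,
    (IsSuperDominatingSet G S ∧ S.ncard = superDomNum G) ∧
    ∃ Sstar ⊆ S, (Sstar.ncard = Sᶜ.ncard ∧
        ∀ u ∈ Sᶜ, ∃ v ∈ Sstar, G.neighborSet v ∩ Sᶜ = {u}) ∧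
    ∃ X ⊆ S, ((⋃ x ∈ X, G.neighborSet x) ∩ (Sᶜ ∪ Sstar) = ∅) ∧ X.ncard = k}

theorem IsSuperDominatingSet.card_le_two_mul {V : Type*} [Fintype V] {G : SimpleGraph V}
    {D : Set V} (hD : IsSuperDominatingSet G D) : Fintype.card V ≤ 2 * D.ncard := by
  choose! f hf using hD
  have h : Dᶜ.ncard ≤ D.ncard := by
    refine Set.ncard_le_ncard_of_injOn f (fun u hu => (hf u hu).1) ?_ (Set.toFinite _)
    intro u hu v hv huv
    have := (hf u hu).2
    rw [huv, (hf v hv).2] at this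
    exact (Set.singleton_injective this).symm
  have h2 := Set.ncard_add_ncard_compl D
  rw [Nat.card_eq_fintype_card] at h2
  omega

/-- The infimum defining the super domination number is attained, since the whole vertex set is
super dominating. -/
theorem exists_isSuperDominatingSet_ncard_eq {V : Type*} (G : SimpleGraph V) :
    ∃ D : Set V, IsSuperDominatingSet G D ∧ D.ncard = superDomNum G :=
  Nat.sInf_mem (s := {k | ∃ D : Set V, IsSuperDominatingSet G D ∧ D.ncard = k})
    ⟨_, Set.univ, fun u hu => absurd (Set.mem_univ u) hu, rfl⟩

theorem IsSuperDominatingSet.superDomNum_le {V : Type*} {G : SimpleGraph V} {D : Set V}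
    (hD : IsSuperDominatingSet G D) : superDomNum G ≤ D.ncard :=
  Nat.sInf_le ⟨D, hD, rfl⟩

/-- The construction behind the upper bound: a super dominating set of `G □ H` obtained from
`S × W` by deleting `X × Tᶜ`. -/
theorem isSuperDominatingSet_boxProd {V W : Type*} {G : SimpleGraph V} {H : SimpleGraph W}
    {S Sstar X : Set V} {T : Set W} (hT : IsSuperDominatingSet H T) (hSS : Sstar ⊆ S)
    (hdom : ∀ u ∈ Sᶜ, ∃ v ∈ Sstar, G.neighborSet v ∩ Sᶜ = {u})
    (hX : ∀ x ∈ X, ∀ y, G.Adj x y → y ∈ S ∧ y ∉ Sstar) :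
    IsSuperDominatingSet (G □ H) (S ×ˢ Set.univ \ X ×ˢ Tᶜ) := by
  have hc : ∀ p : V × W, p ∈ (S ×ˢ (Set.univ : Set W) \ X ×ˢ Tᶜ)ᶜ ↔
      p.1 ∉ S ∨ (p.1 ∈ X ∧ p.2 ∉ T) := by
    intro p
    simp only [Set.mem_compl_iff, Set.mem_sdiff, Set.mem_prod, Set.mem_univ]
    tauto
  rintro ⟨u, w⟩ huw
  rw [hc] at huw
  by_cases hu : u ∈ S
  · obtain ⟨hux, hw⟩ : u ∈ X ∧ w ∉ T := by tauto
    obtain ⟨w', hw', hp⟩ := hT w hw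
    have key : ∀ h, (H.Adj w' h ∧ h ∉ T) ↔ h = w := fun h => Set.ext_iff.1 hp h
    refine ⟨(u, w'), ⟨⟨hu, trivial⟩, fun h => h.2 hw'⟩, ?_⟩
    ext ⟨g, h⟩
    rw [Set.mem_inter_iff, hc, mem_neighborSet, boxProd_adj, Set.mem_singleton_iff, Prod.mk.injEq]
    constructor
    · rintro ⟨⟨hg, rfl⟩ | ⟨hh, rfl⟩, hd⟩
      · have := hX u hux g hg
        tauto
      · exact ⟨rfl, (key h).1 ⟨hh, by tauto⟩⟩
    · rintro ⟨rfl, rfl⟩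
      have := (key h).2 rfl
      exact ⟨Or.inr ⟨this.1, rfl⟩, Or.inr ⟨hux, this.2⟩⟩
  · obtain ⟨v, hv, hp⟩ := hdom u hu
    have key : ∀ g, (G.Adj v g ∧ g ∉ S) ↔ g = u := fun g => Set.ext_iff.1 hp g
    have hvu := (key u).2 rfl
    have hvX : v ∉ X := fun h => hvu.2 (hX v h u hvu.1).1
    refine ⟨(v, w), ⟨⟨hSS hv, trivial⟩, fun h => hvX h.1⟩, ?_⟩
    ext ⟨g, h⟩
    rw [Set.mem_inter_iff, hc, mem_neighborSet, boxProd_adj, Set.mem_singleton_iff, Prod.mk.injEq]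
    constructor
    · rintro ⟨⟨hg, hwh⟩ | ⟨hh, hvg⟩, hd⟩
      · rcases hd with hd | hd
        · exact ⟨(key g).1 ⟨hg, hd⟩, hwh.symm⟩
        · exact absurd hv (hX g hd.1 v hg.symm).2
      · change v = g at hvg
        subst hvg
        have := hSS hv
        tauto
    · rintro ⟨rfl, rfl⟩
      exact ⟨Or.inl ⟨hvu.1, rfl⟩, Or.inl hu⟩

theorem superDomNum_boxProd_le {V W : Type*} [Fintype V] [Fintype W] {G : SimpleGraph V}
    {H : SimpleGraph W} {S Sstar X : Set V} (hSS : Sstar ⊆ S)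
    (hdom : ∀ u ∈ Sᶜ, ∃ v ∈ Sstar, G.neighborSet v ∩ Sᶜ = {u}) (hXS : X ⊆ S)
    (hX : ∀ x ∈ X, ∀ y, G.Adj x y → y ∈ S ∧ y ∉ Sstar) :
    superDomNum (G □ H) ≤
      Fintype.card W * S.ncard - X.ncard * (Fintype.card W - superDomNum H) := by
  obtain ⟨T, hT, hTc⟩ := exists_isSuperDominatingSet_ncard_eq H
  refine (isSuperDominatingSet_boxProd hT hSS hdom hX).superDomNum_le.trans_eq ?_
  have hsub : X ×ˢ Tᶜ ⊆ S ×ˢ (Set.univ : Set W) := Set.prod_mono hXS (Set.subset_univ _)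
  have hTT := Set.ncard_add_ncard_compl T
  rw [Nat.card_eq_fintype_card] at hTT
  rw [Set.ncard_sdiff hsub (Set.toFinite _), Set.ncard_prod, Set.ncard_prod, Set.ncard_univ,
    Nat.card_eq_fintype_card, ← hTc, mul_comm S.ncard, show Tᶜ.ncard = Fintype.card W - T.ncard by omega]

theorem superDomNum_boxProd_bounds {V W : Type*} [Fintype V] [Fintype W]
    (G : SimpleGraph V) (H : SimpleGraph W)
    (hn : 2 ≤ Fintype.card V) (hn' : 2 ≤ Fintype.card W) :
    (Fintype.card V * Fintype.card W + 1) / 2 ≤ superDomNum (G □ H) ∧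
    superDomNum (G □ H) ≤
      Fintype.card W * superDomNum G -
        lambdaParam G * (Fintype.card W - superDomNum H) := by
  constructor
  · obtain ⟨D, hD, hc⟩ := exists_isSuperDominatingSet_ncard_eq (G □ H)
    have := hD.card_le_two_mul
    rw [Fintype.card_prod, hc] at this
    omega
  · rcases Set.eq_empty_or_nonempty {k | ∃ S : Set V,
      (IsSuperDominatingSet G S ∧ S.ncard = superDomNum G) ∧
      ∃ Sstar ⊆ S, (Sstar.ncard = Sᶜ.ncard ∧
          ∀ u ∈ Sᶜ, ∃ v ∈ Sstar, G.neighborSet v ∩ Sᶜ = {u}) ∧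
      ∃ X ⊆ S, ((⋃ x ∈ X, G.neighborSet x) ∩ (Sᶜ ∪ Sstar) = ∅) ∧ X.ncard = k} with he | hne
    · -- A supremum over the empty set is `0`, so taking `X = ∅` suffices here.
      have h0 : lambdaParam G = 0 := by
        rw [lambdaParam, he, csSup_empty, bot_eq_zero]
      obtain ⟨S, hS, hSc⟩ := exists_isSuperDominatingSet_ncard_eq G
      rw [h0, ← hSc]
      simpa using superDomNum_boxProd_le (H := H) (X := ∅) subset_rfl hS (Set.empty_subset S)
        (by simp)
    · have hbdd : BddAbove {k | ∃ S : Set V,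
          (IsSuperDominatingSet G S ∧ S.ncard = superDomNum G) ∧
          ∃ Sstar ⊆ S, (Sstar.ncard = Sᶜ.ncard ∧
              ∀ u ∈ Sᶜ, ∃ v ∈ Sstar, G.neighborSet v ∩ Sᶜ = {u}) ∧
          ∃ X ⊆ S, ((⋃ x ∈ X, G.neighborSet x) ∩ (Sᶜ ∪ Sstar) = ∅) ∧ X.ncard = k} := by
        refine ⟨Fintype.card V, ?_⟩
        rintro k ⟨S, -, Sstar, -, -, X, -, -, rfl⟩
        exact (Set.ncard_le_card X).trans_eq Nat.card_eq_fintype_card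
      obtain ⟨S, ⟨-, hSc⟩, Sstar, hSS, ⟨-, hdom⟩, X, hXS, hN, hXc⟩ := Nat.sSup_mem hne hbdd
      change X.ncard = lambdaParam G at hXc
      rw [← hSc, ← hXc]
      refine superDomNum_boxProd_le hSS hdom hXS fun x hx y hxy => ?_
      have hy : y ∉ Sᶜ ∪ Sstar := fun h =>
        Set.notMem_empty y (hN ▸ ⟨Set.mem_biUnion hx hxy, h⟩)
      simpa using hy
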